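/- Let n ≥ 1 and let A, B ∈ Mod be nonisomorphic structures. If there exists a set C ∈ Σ⁰_{2n}(Mod) such that every S ∈ Mod with S ≅ A belongs to C and no S ∈ Mod with S ≅ B belongs to C, then the family {A, B} is =_{ℕ^ℕ}^{n+}-learnable. -/

import Mathlib

/-!  Common definitions.

`Tower n` is the space ℕ^(ℕ^(n+1)) of the paper: `Tower 0 = ℕ → ℕ`,
`Tower (n+1) = ℕ → Tower n`, each with the product topology (ℕ discrete).
-/

def Tower : ℕ → Type
  | 0 => ℕ → ℕ
  | n + 1 => ℕ → Tower n

instance Tower.topologicalSpace : (n : ℕ) → TopologicalSpace (Tower n)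
  | 0 => inferInstanceAs (TopologicalSpace (ℕ → ℕ))
  | n + 1 => letI := Tower.topologicalSpace n
             inferInstanceAs (TopologicalSpace (ℕ → Tower n))

/-- The Friedman–Stanley jump `E⁺` of an equivalence relation `E` on `X`. -/
def FSJump {X : Type*} (E : X → X → Prop) (p q : ℕ → X) : Prop :=
  (∀ k, ∃ l, E (p k) (q l)) ∧ ∀ l, ∃ k, E (q l) (p k)

/-- The power `E^ω` of an equivalence relation `E` on `X`. -/
def RelPow {X : Type*} (E : X → X → Prop) (p q : ℕ → X) : Prop :=
  ∀ k, E (p k) (q k)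

/-- `eqNatPlus n` is the relation `=_ℕ^{(n+1)+}` on `Tower n = ℕ^(ℕ^(n+1))`. -/
def eqNatPlus : (n : ℕ) → Tower n → Tower n → Prop
  | 0 => FSJump (· = · : ℕ → ℕ → Prop)
  | n + 1 => FSJump (eqNatPlus n)

/-- `eqBairePlus n` is the relation `=_{ℕ^ℕ}^{(n+1)+}` on `Tower (n+1) = ℕ^(ℕ^(n+2))`. -/
def eqBairePlus : (n : ℕ) → Tower (n + 1) → Tower (n + 1) → Prop
  | 0 => FSJump (· = · : (ℕ → ℕ) → (ℕ → ℕ) → Prop)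
  | n + 1 => FSJump (eqBairePlus n)

/-- `FullRel m` on `Tower m = ℕ^(ℕ^(m+1))`: for `m = 2n` it is `(=_ℕ^+)^{n(ω+)}`,
for `m = 2n+1` it is `(=_{ℕ^ℕ}^+)^{n(ω+)}` (with `E^{0(ω+)} = E`,
`E^{(n+1)(ω+)} = ((E^{n(ω+)})^ω)^+`). -/
def FullRel : (m : ℕ) → Tower m → Tower m → Prop
  | 0 => FSJump (· = · : ℕ → ℕ → Prop)
  | 1 => FSJump (· = · : (ℕ → ℕ) → (ℕ → ℕ) → Prop)
  | m + 2 => FSJump (RelPow (FullRel m))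

/-- The pair of canonical elements `(F_{m+1}, I_{m+1})` of `Tower m = ℕ^(ℕ^(m+1))`. -/
def can : (m : ℕ) → Tower m × Tower m
  | 0 => (fun k => if k = 0 then 0 else 1, fun _ => 1)
  | 1 => (fun i k => if i = 0 then 0 else if k + 1 < i then 0 else 1,
          fun i k => if k < i then 0 else 1)
  | m + 2 =>
      (fun i k => if i = 0 then (can m).1 else if k + 1 < i then (can m).1 else (can m).2,
       fun i k => if k < i then (can m).1 else (can m).2)

/-- The canonical element `F_{m+1} ∈ ℕ^(ℕ^(m+1))`. -/
def canF (m : ℕ) : Tower m := (can m).1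

/-- The canonical element `I_{m+1} ∈ ℕ^(ℕ^(m+1))`. -/
def canI (m : ℕ) : Tower m := (can m).2

/-- `p ∈ Tower m = ℕ^(ℕ^(m+1))` is `full_{m+1}`. -/
def IsFull (m : ℕ) (p : Tower m) : Prop := FullRel m p (canF m)

/-- `p ∈ Tower m = ℕ^(ℕ^(m+1))` is `initial_{m+1}`. -/
def IsInitial (m : ℕ) (p : Tower m) : Prop := FullRel m p (canI m)

open Classical in
/-- The permission operator `∧₀`. -/
noncomputable def perm0 (p q : ℕ → ℕ) : ℕ → ℕ :=
  fun k => if ∀ j ≤ k, p j = q j then p k else 1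

/-- The permission operator `∧_{m+1}` on `Tower m = ℕ^(ℕ^(m+1))`
(with `⟨·,·⟩ = Nat.pair`). -/
noncomputable def perm : (m : ℕ) → Tower m → Tower m → Tower m
  | 0, p, q => fun x => max (p (Nat.unpair x).1) (q (Nat.unpair x).2)
  | 1, p, q => fun x => perm0 (p (Nat.unpair x).1) (q (Nat.unpair x).2)
  | m + 2, p, q => fun x k => perm m (p (Nat.unpair x).1 k) (q (Nat.unpair x).2 k)

/-- The operator `⊗_{m+1,i}` on `Tower m = ℕ^(ℕ^(m+1))` (with `⟨·,·⟩ = Nat.pair`). -/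
def otimes : (m : ℕ) → ℕ → Tower m → Tower m
  | 0, i, p => fun k => Nat.pair (p k) i
  | m + 1, i, p => fun k => otimes m i (p k)

/-- `E` continuously reduces to `F`. -/
def ContReduces {X Y : Type*} [TopologicalSpace X] [TopologicalSpace Y]
    (E : X → X → Prop) (F : Y → Y → Prop) : Prop :=
  ∃ f : X → Y, Continuous f ∧ ∀ x x', E x x' ↔ F (f x) (f x')

/-- `SigmaLevel X n` is the pointclass `Σ⁰_{n+1}(X)`: `Σ⁰_1` = open sets,
`Σ⁰_{n+1}` = countable unions of complements of `Σ⁰_n` sets. -/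
def SigmaLevel (X : Type*) [TopologicalSpace X] : ℕ → Set (Set X)
  | 0 => {C | IsOpen C}
  | n + 1 => {C | ∃ A : ℕ → Set X, (∀ i, A i ∈ SigmaLevel X n) ∧ C = ⋃ i, (A i)ᶜ}

/-- The space of `(ι, ar)`-structures with domain ℕ. -/
def Md (ι : Type) (ar : ι → ℕ) : Type := ∀ i : ι, (Fin (ar i) → ℕ) → Bool

instance (ι : Type) (ar : ι → ℕ) : TopologicalSpace (Md ι ar) :=
  inferInstanceAs (TopologicalSpace (∀ i : ι, (Fin (ar i) → ℕ) → Bool))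

/-- Isomorphism of structures with domain ℕ. -/
def Iso {ι : Type} {ar : ι → ℕ} (A B : Md ι ar) : Prop :=
  ∃ σ : ℕ → ℕ, Function.Bijective σ ∧ ∀ i v, A i v = B i (σ ∘ v)

/-- The learning domain of a family: the closure of `K` under isomorphism. -/
def LearnDom {ι : Type} {ar : ι → ℕ} (K : Set (Md ι ar)) : Set (Md ι ar) :=
  {S | ∃ A ∈ K, Iso S A}

/-- The family `K` is `E`-learnable. -/
def Learnable {ι : Type} {ar : ι → ℕ} {X : Type*} [TopologicalSpace X]
    (E : X → X → Prop) (K : Set (Md ι ar)) : Prop :=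
  ∃ Γ : LearnDom K → X, Continuous Γ ∧
    ∀ S S' : LearnDom K, (Iso S.1 S'.1 ↔ E (Γ S) (Γ S'))

/-- A countable family of pairwise nonisomorphic structures. -/
def GoodFamily {ι : Type} {ar : ι → ℕ} (K : Set (Md ι ar)) : Prop :=
  K.Countable ∧ ∀ A ∈ K, ∀ B ∈ K, A ≠ B → ¬ Iso A B

/-- `E` is learn-reducible to `F` (w.r.t. structures in `Md ι ar`). -/
def LearnRed (ι : Type) (ar : ι → ℕ) {X Y : Type*} [TopologicalSpace X]
    [TopologicalSpace Y] (E : X → X → Prop) (F : Y → Y → Prop) : Prop :=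
  ∀ K : Set (Md ι ar), GoodFamily K → Learnable E K → Learnable F K

/-- `E` is compact for learning (w.r.t. structures in `Md ι ar`). -/
def CompactForLearning (ι : Type) (ar : ι → ℕ) {X : Type*} [TopologicalSpace X]
    (E : X → X → Prop) : Prop :=
  ∀ K : Set (Md ι ar), GoodFamily K →
    (Learnable E K ↔ ∀ A ∈ K, ∀ B ∈ K, A ≠ B → Learnable E ({A, B} : Set (Md ι ar)))

section Helpers

/-- Continuous reduction of membership in `D` to the pair of classes of `a`, `b`. -/
def RedTo {X Y : Type} [TopologicalSpace X] [TopologicalSpace Y] (E : Y → Y → Prop)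
    (a b : Y) (D : Set X) : Prop :=
  ∃ Γ : X → Y, Continuous Γ ∧ ∀ S, (S ∈ D → E (Γ S) a) ∧ (S ∉ D → E (Γ S) b)

theorem FSJump_equiv {Y : Type} {E : Y → Y → Prop} (h : Equivalence E) :
    Equivalence (FSJump E) where
  refl p := ⟨fun k => ⟨k, h.refl _⟩, fun k => ⟨k, h.refl _⟩⟩
  symm := fun ⟨h1, h2⟩ => ⟨h2, h1⟩
  trans := by
    rintro p q r ⟨h1, h2⟩ ⟨h3, h4⟩
    constructor
    · intro k
      obtain ⟨l, hl⟩ := h1 k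
      obtain ⟨m, hm⟩ := h3 l
      exact ⟨m, h.trans hl hm⟩
    · intro k
      obtain ⟨l, hl⟩ := h4 k
      obtain ⟨m, hm⟩ := h2 l
      exact ⟨m, h.trans hl hm⟩

/-- The sequence `a^k b^∞`. -/
def maskSeq {Y : Type} (a b : Y) (k : ℕ) : ℕ → Y := fun j => if j < k then a else b

/-- Positive class. -/
def stepA {Y Z : Type} (c : (ℕ → Y) → Z) (a b : Y) : ℕ → Z
  | 0 => c (fun _ => a)
  | k + 1 => c (maskSeq a b k)

/-- Negative class. -/
def stepB {Y Z : Type} (c : (ℕ → Y) → Z) (a b : Y) : ℕ → Z :=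
  fun k => c (maskSeq a b k)

theorem step_ne {Y Z : Type} {E : Y → Y → Prop} {F : Z → Z → Prop} {c : (ℕ → Y) → Z}
    (hc : ∀ p q, F (c p) (c q) ↔ ∀ j, E (p j) (q j)) {a b : Y} (hab : ¬ E a b) :
    ¬ FSJump F (stepA c a b) (stepB c a b) := by
  rintro ⟨h, -⟩
  obtain ⟨l, hl⟩ := h 0
  have := (hc _ _).1 hl l
  simp [maskSeq] at this
  exact hab this

theorem step_red {X Y Z : Type} [TopologicalSpace X] [TopologicalSpace Y] [TopologicalSpace Z]
    {E : Y → Y → Prop} {F : Z → Z → Prop} {c : (ℕ → Y) → Z} (hF : Equivalence F)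
    (hcc : Continuous c)
    (hc : ∀ p q, F (c p) (c q) ↔ ∀ j, E (p j) (q j)) {a b : Y}
    (𝒟 : Set (Set X)) (hinter : ∀ U ∈ 𝒟, ∀ V ∈ 𝒟, U ∩ V ∈ 𝒟)
    (hred : ∀ D ∈ 𝒟, RedTo E a b D) (D : ℕ → ℕ → Set X) (hD : ∀ i j, D i j ∈ 𝒟) :
    RedTo (FSJump F) (stepA c a b) (stepB c a b) (⋃ i, ⋂ j, D i j) := by
  let D' : ℕ → ℕ → Set X := fun i j => Nat.rec (D i 0) (fun j s => s ∩ D i (j + 1)) j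
  have hD' : ∀ i j, D' i j ∈ 𝒟 := by
    intro i j
    induction j with
    | zero => exact hD i 0
    | succ j ih => exact hinter _ ih _ (hD i (j + 1))
  have hmem : ∀ i j S, S ∈ D' i j ↔ ∀ k ≤ j, S ∈ D i k := by
    intro i j S
    induction j with
    | zero => simp [D']
    | succ j ih =>
      change (S ∈ D' i j ∧ S ∈ D i (j + 1)) ↔ _
      rw [ih]
      constructor
      · rintro ⟨h1, h2⟩ k hk
        rcases Nat.lt_or_ge j k with h | h
        · obtain rfl : k = j + 1 := by omega
          exact h2
        · exact h1 k h
      · intro h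
        exact ⟨fun k hk => h k (by omega), h _ le_rfl⟩
  choose G hG hGs using fun i j => hred (D' i j) (hD' i j)
  have hall : ∀ S i, (∀ j, S ∈ D i j) → F (c fun j => G i j S) (c fun _ => a) := by
    intro S i h
    rw [hc]
    intro j
    exact (hGs i j S).1 ((hmem i j S).2 fun k _ => h k)
  have hnot : ∀ S i, (¬ ∀ j, S ∈ D i j) → ∃ k, F (c fun j => G i j S) (c (maskSeq a b k)) := by
    intro S i h
    classical
    push Not at h
    refine ⟨Nat.find h, (hc _ _).2 fun j => ?_⟩
    unfold maskSeq
    split_ifs with hj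
    · refine (hGs i j S).1 ((hmem i j S).2 fun k hk => ?_)
      by_contra hk'
      exact Nat.find_min h (lt_of_le_of_lt hk hj) hk'
    · refine (hGs i j S).2 fun hh => ?_
      exact Nat.find_spec h ((hmem i j S).1 hh _ (by omega))
  refine ⟨fun S x => if x % 2 = 0 then c (maskSeq a b (x / 2)) else c (fun j => G (x / 2) j S),
    ?_, fun S => ⟨fun hS => ?_, fun hS => ?_⟩⟩
  · refine continuous_pi fun x => ?_
    split_ifs
    · exact continuous_const
    · exact hcc.comp (continuous_pi fun j => hG _ j)
  · simp only [Set.mem_iUnion, Set.mem_iInter] at hS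
    obtain ⟨i, hi⟩ := hS
    constructor
    · intro x
      by_cases hx : x % 2 = 0
      · exact ⟨x / 2 + 1, by simpa [hx, stepA] using hF.refl _⟩
      · by_cases h : ∀ j, S ∈ D (x / 2) j
        · exact ⟨0, by simpa [hx, stepA] using hall S _ h⟩
        · obtain ⟨k, hk⟩ := hnot S _ h
          exact ⟨k + 1, by simpa [hx, stepA] using hk⟩
    · intro l
      cases l with
      | zero =>
        refine ⟨2 * i + 1, ?_⟩
        have h1 : (2 * i + 1) % 2 ≠ 0 := by omega
        have h2 : (2 * i + 1) / 2 = i := by omega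
        simp only [h1, h2, if_false, stepA]
        exact hF.symm (hall S i hi)
      | succ k =>
        refine ⟨2 * k, ?_⟩
        have h1 : (2 * k) % 2 = 0 := by omega
        have h2 : (2 * k) / 2 = k := by omega
        simp only [h1, h2, if_true, stepA]
        exact hF.refl _
  · simp only [Set.mem_iUnion, Set.mem_iInter, not_exists] at hS
    constructor
    · intro x
      by_cases hx : x % 2 = 0
      · exact ⟨x / 2, by simpa [hx, stepB] using hF.refl _⟩
      · obtain ⟨k, hk⟩ := hnot S _ (hS (x / 2))
        exact ⟨k, by simpa [hx, stepB] using hk⟩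
    · intro k
      refine ⟨2 * k, ?_⟩
      have h1 : (2 * k) % 2 = 0 := by omega
      have h2 : (2 * k) / 2 = k := by omega
      simp only [h1, h2, if_true, stepB]
      exact hF.refl _

/-- Iterated jump of equality on Baire space. -/
def RR : (n : ℕ) → Tower n → Tower n → Prop
  | 0 => fun p q => p = q
  | n + 1 => FSJump (RR n)

theorem RR_equiv : ∀ n, Equivalence (RR n)
  | 0 => eq_equivalence
  | n + 1 => FSJump_equiv (RR_equiv n)

theorem RR_succ : ∀ n, eqBairePlus n = RR (n + 1)
  | 0 => rfl
  | n + 1 => congrArg FSJump (RR_succ n)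

theorem RR_otimes : ∀ n i j (p q : Tower n),
    RR n (otimes n i p) (otimes n j q) ↔ i = j ∧ RR n p q
  | 0, i, j, p, q => by
    constructor
    · intro h
      have h' : ∀ k, Nat.pair (p k) i = Nat.pair (q k) j := fun k => congrFun h k
      exact ⟨(Nat.pair_eq_pair.1 (h' 0)).2, funext fun k => (Nat.pair_eq_pair.1 (h' k)).1⟩
    · rintro ⟨rfl, h⟩
      have h : p = q := h
      subst h
      rfl
  | n + 1, i, j, p, q => by
    have key := RR_otimes n
    constructor
    · rintro ⟨h1, h2⟩
      obtain ⟨l, hl⟩ := h1 0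
      refine ⟨((key _ _ _ _).1 hl).1, fun k => ?_, fun k => ?_⟩
      · obtain ⟨l, hl⟩ := h1 k
        exact ⟨l, ((key _ _ _ _).1 hl).2⟩
      · obtain ⟨l, hl⟩ := h2 k
        exact ⟨l, ((key _ _ _ _).1 hl).2⟩
    · rintro ⟨rfl, h1, h2⟩
      refine ⟨fun k => ?_, fun k => ?_⟩
      · obtain ⟨l, hl⟩ := h1 k
        exact ⟨l, (key _ _ _ _).2 ⟨rfl, hl⟩⟩
      · obtain ⟨l, hl⟩ := h2 k
        exact ⟨l, (key _ _ _ _).2 ⟨rfl, hl⟩⟩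

theorem continuous_otimes : ∀ n i, Continuous (otimes n i)
  | 0, i => by
    refine continuous_pi fun k => ?_
    exact (continuous_of_discreteTopology (f := fun m : ℕ => Nat.pair m i)).comp
      (continuous_apply k)
  | n + 1, i => by
    refine continuous_pi fun k => ?_
    exact (continuous_otimes n i).comp (continuous_apply k)

/-- Coding a sequence of elements as one element. -/
def codeT (n : ℕ) (p : ℕ → Tower (n + 1)) : Tower (n + 1) :=
  fun x => otimes n (Nat.unpair x).1 (p (Nat.unpair x).1 (Nat.unpair x).2)

theorem continuous_codeT (n : ℕ) : Continuous (codeT n) := by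
  refine continuous_pi fun x => ?_
  refine (continuous_otimes n _).comp ?_
  have h1 : Continuous fun p : ℕ → Tower (n + 1) => p (Nat.unpair x).1 := continuous_apply _
  have h2 : Continuous fun p : ℕ → Tower n => p (Nat.unpair x).2 := continuous_apply _
  exact h2.comp h1

theorem codeT_half (n : ℕ) (p q : ℕ → Tower (n + 1)) :
    (∀ k, ∃ l, RR n (codeT n p k) (codeT n q l)) ↔
      ∀ j, ∀ k, ∃ l, RR n (p j k) (q j l) := by
  constructor
  · intro h j k
    obtain ⟨l, hl⟩ := h (Nat.pair j k)
    have hl := (RR_otimes _ _ _ _ _).1 hl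
    simp only [Nat.unpair_pair] at hl
    obtain ⟨h1, h2⟩ := hl
    rw [← h1] at h2
    exact ⟨_, h2⟩
  · intro h k
    obtain ⟨l, hl⟩ := h (Nat.unpair k).1 (Nat.unpair k).2
    refine ⟨Nat.pair (Nat.unpair k).1 l, (RR_otimes _ _ _ _ _).2 ?_⟩
    simp only [Nat.unpair_pair]
    exact ⟨trivial, hl⟩

theorem codeT_iff (n : ℕ) (p q : ℕ → Tower (n + 1)) :
    RR (n + 1) (codeT n p) (codeT n q) ↔ ∀ j, RR (n + 1) (p j) (q j) := by
  change (_ ∧ _) ↔ ∀ j, (_ ∧ _)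
  rw [codeT_half, codeT_half, forall_and]

theorem sigma_union {X : Type} [TopologicalSpace X] : ∀ n, ∀ U ∈ SigmaLevel X n,
    ∀ V ∈ SigmaLevel X n, U ∪ V ∈ SigmaLevel X n
  | 0, U, hU, V, hV => IsOpen.union hU hV
  | n + 1, U, hU, V, hV => by
    obtain ⟨A, hA, rfl⟩ := hU
    obtain ⟨B, hB, rfl⟩ := hV
    refine ⟨fun x => if x % 2 = 0 then A (x / 2) else B (x / 2), fun x => ?_, ?_⟩
    · dsimp only
      split_ifs
      · exact hA _
      · exact hB _
    · ext S
      simp only [Set.mem_union, Set.mem_iUnion]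
      constructor
      · rintro (⟨i, hi⟩ | ⟨i, hi⟩)
        · refine ⟨2 * i, ?_⟩
          have h1 : (2 * i) % 2 = 0 := by omega
          have h2 : (2 * i) / 2 = i := by omega
          simpa only [h1, h2, if_true] using hi
        · refine ⟨2 * i + 1, ?_⟩
          have h1 : (2 * i + 1) % 2 ≠ 0 := by omega
          have h2 : (2 * i + 1) / 2 = i := by omega
          simpa only [h1, h2, if_false] using hi
      · rintro ⟨x, hx⟩
        split_ifs at hx
        · exact Or.inl ⟨_, hx⟩
        · exact Or.inr ⟨_, hx⟩

theorem sigma_inter {X : Type} [TopologicalSpace X] : ∀ n, ∀ U ∈ SigmaLevel X n,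
    ∀ V ∈ SigmaLevel X n, U ∩ V ∈ SigmaLevel X n
  | 0, U, hU, V, hV => IsOpen.inter hU hV
  | n + 1, U, hU, V, hV => by
    obtain ⟨A, hA, rfl⟩ := hU
    obtain ⟨B, hB, rfl⟩ := hV
    refine ⟨fun x => A (Nat.unpair x).1 ∪ B (Nat.unpair x).2,
      fun x => sigma_union n _ (hA _) _ (hB _), ?_⟩
    ext S
    simp only [Set.mem_inter_iff, Set.mem_iUnion, Set.mem_compl_iff, Set.mem_union, not_or]
    constructor
    · rintro ⟨⟨i, hi⟩, ⟨j, hj⟩⟩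
      exact ⟨Nat.pair i j, by simpa using ⟨hi, hj⟩⟩
    · rintro ⟨x, h1, h2⟩
      exact ⟨⟨_, h1⟩, ⟨_, h2⟩⟩

theorem open_clopen {X : Type} [TopologicalSpace X] [CompactSpace X] [T2Space X]
    [TotallyDisconnectedSpace X] [SecondCountableTopology X] (U : Set X) (hU : IsOpen U) :
    ∃ V : ℕ → Set X, (∀ j, IsClopen (V j)) ∧ U = ⋃ j, V j := by
  have hb : TopologicalSpace.IsTopologicalBasis {s : Set X | IsClopen s} :=
    isTopologicalBasis_isClopen
  obtain ⟨S, hS, hUS⟩ := hb.open_eq_sUnion hU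
  obtain ⟨T, hTc, hTS, hT⟩ := TopologicalSpace.isOpen_sUnion_countable S
    (fun s hs => (hS hs).isOpen)
  have hne : (insert (∅ : Set X) T).Nonempty := ⟨∅, Set.mem_insert _ _⟩
  obtain ⟨f, hf⟩ := (hTc.insert ∅).exists_eq_range hne
  refine ⟨f, fun j => ?_, ?_⟩
  · have : f j ∈ insert (∅ : Set X) T := hf ▸ Set.mem_range_self j
    rcases this with h | h
    · rw [h]; exact isClopen_empty
    · exact hS (hTS h)
  · rw [hUS, ← hT, ← Set.sUnion_range, ← hf]
    simp

theorem main_red {X : Type} [TopologicalSpace X] [CompactSpace X] [T2Space X]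
    [TotallyDisconnectedSpace X] [SecondCountableTopology X] (n : ℕ) :
    ∃ a b : Tower (n + 1), ¬ RR (n + 1) a b ∧
      ∀ C ∈ SigmaLevel X (2 * n + 1), RedTo (RR (n + 1)) a b C := by
  induction n with
  | zero =>
    have hc : ∀ p q : ℕ → ℕ, RR 0 (id p : ℕ → ℕ) (id q : ℕ → ℕ) ↔ ∀ j, p j = q j :=
      fun p q => funext_iff
    refine ⟨stepA (Z := Tower 0) (id : (ℕ → ℕ) → (ℕ → ℕ)) 1 0,
      stepB (Z := Tower 0) (id : (ℕ → ℕ) → (ℕ → ℕ)) 1 0, step_ne hc one_ne_zero, ?_⟩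
    rintro C ⟨A, hA, rfl⟩
    choose V hV hAV using fun i => open_clopen (A i) (hA i)
    have : (⋃ i, (A i)ᶜ) = ⋃ i, ⋂ j, (V i j)ᶜ := by
      congr 1
      funext i
      rw [hAV i, Set.compl_iUnion]
    rw [this]
    refine step_red (Z := Tower 0) (RR_equiv 0) continuous_id hc {s : Set X | IsClopen s}
      (fun U hU V hV => IsClopen.inter hU hV) ?_ _ (fun i j => (hV i j).compl)
    intro D hD
    classical
    refine ⟨fun S => if S ∈ D then 1 else 0, ?_, fun S => ⟨fun h => if_pos h, fun h => if_neg h⟩⟩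
    exact ((IsLocallyConstant.iff_continuous _).1
      (IsLocallyConstant.const (1 : ℕ))).if (fun x hx => by
        have hD : IsClopen D := hD
        have h0 : frontier D = ∅ := hD.frontier_eq
        change x ∈ frontier D at hx
        simp [h0] at hx) continuous_const
  | succ n ih =>
    obtain ⟨a, b, hab, hred⟩ := ih
    refine ⟨stepA (codeT n) a b, stepB (codeT n) a b, step_ne (codeT_iff n) hab, ?_⟩
    rintro C ⟨A, hA, rfl⟩
    choose V hV hAV using hA
    have : (⋃ i, (A i)ᶜ) = ⋃ i, ⋂ j, V i j := by
      congr 1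
      funext i
      rw [hAV i, Set.compl_iUnion]
      simp
    rw [this]
    exact step_red (RR_equiv (n + 1)) (continuous_codeT n) (codeT_iff n)
      (SigmaLevel X (2 * n + 1)) (sigma_inter _) hred V hV

theorem Iso.symm' {ι : Type} {ar : ι → ℕ} {A B : Md ι ar} (h : Iso A B) : Iso B A := by
  obtain ⟨σ, hσ, h⟩ := h
  obtain ⟨τ, h1, h2⟩ := Function.bijective_iff_has_inverse.1 hσ
  refine ⟨τ, Function.bijective_iff_has_inverse.2 ⟨σ, h2, h1⟩, fun i v => ?_⟩
  rw [h]
  congr 1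
  funext x
  exact (h2 (v x)).symm

theorem Iso.trans' {ι : Type} {ar : ι → ℕ} {A B C : Md ι ar} (h : Iso A B) (h' : Iso B C) :
    Iso A C := by
  obtain ⟨σ, hσ, h⟩ := h
  obtain ⟨τ, hτ, h'⟩ := h'
  exact ⟨τ ∘ σ, hτ.comp hσ, fun i v => by rw [h, h']; rfl⟩

end Helpers

/-- for `n ≥ 1` (here via the shift: `eqBairePlus n = =_{ℕ^ℕ}^{(n+1)+}` and
`SigmaLevel (Md ι ar) (2*n+1) = Σ⁰_{2n+2} = Σ⁰_{2(n+1)}`): if `A ≇ B` and some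
`Σ⁰_{2(n+1)}` set `C` contains every copy of `A` and no copy of `B`, then
`{A, B}` is `=_{ℕ^ℕ}^{(n+1)+}`-learnable. -/
theorem stmt_11 {ι : Type} [Countable ι] (ar : ι → ℕ) (n : ℕ)
    (A B : Md ι ar) (hAB : ¬ Iso A B)
    (C : Set (Md ι ar)) (hC : C ∈ SigmaLevel (Md ι ar) (2 * n + 1))
    (hA : ∀ S, Iso S A → S ∈ C) (hB : ∀ S, Iso S B → S ∉ C) :
    Learnable (eqBairePlus n) ({A, B} : Set (Md ι ar)) := by
  haveI : CompactSpace (Md ι ar) :=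
    inferInstanceAs (CompactSpace (∀ i : ι, (Fin (ar i) → ℕ) → Bool))
  haveI : T2Space (Md ι ar) :=
    inferInstanceAs (T2Space (∀ i : ι, (Fin (ar i) → ℕ) → Bool))
  haveI : TotallyDisconnectedSpace (Md ι ar) :=
    inferInstanceAs (TotallyDisconnectedSpace (∀ i : ι, (Fin (ar i) → ℕ) → Bool))
  haveI : SecondCountableTopology (Md ι ar) :=
    inferInstanceAs (SecondCountableTopology (∀ i : ι, (Fin (ar i) → ℕ) → Bool))
  obtain ⟨a, b, hab, hred⟩ := main_red (X := Md ι ar) n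
  obtain ⟨G, hG, hGs⟩ := hred C hC
  have hE := RR_equiv (n + 1)
  rw [RR_succ]
  refine ⟨fun S => G S.1, hG.comp continuous_subtype_val, ?_⟩
  rintro ⟨S, K, hK, hS⟩ ⟨S', K', hK', hS'⟩
  dsimp only
  rcases hK with rfl | hK <;> rcases hK' with rfl | hK'
  · exact ⟨fun _ => hE.trans ((hGs S).1 (hA _ hS)) (hE.symm ((hGs S').1 (hA _ hS'))),
      fun _ => hS.trans' hS'.symm'⟩
  · obtain rfl : K' = B := hK'
    refine ⟨fun h => absurd (hS.symm'.trans' (h.trans' hS')) hAB, fun h => absurd ?_ hab⟩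
    exact hE.trans (hE.symm ((hGs S).1 (hA _ hS))) (hE.trans h ((hGs S').2 (hB _ hS')))
  · obtain rfl : K = B := hK
    refine ⟨fun h => absurd (hS'.symm'.trans' (h.symm'.trans' hS)) hAB, fun h => absurd ?_ hab⟩
    exact hE.trans (hE.symm ((hGs S').1 (hA _ hS'))) (hE.trans (hE.symm h) ((hGs S).2 (hB _ hS)))
  · obtain rfl : K = B := hK
    obtain rfl : K' = K := hK'
    exact ⟨fun _ => hE.trans ((hGs S).2 (hB _ hS)) (hE.symm ((hGs S').2 (hB _ hS'))),
      fun _ => hS.trans' hS'.symm'⟩
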